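/- arXiv:2111.12380 — 3 statements merged into one kernel-verified Lean document; each statement's English description precedes it below -/
import Mathlib

section
/- Let G be a finite simple graph on n ≥ 1 vertices with independence number α(G). Then α(G) ≤ m_G([0, n − α(G)]), i.e. the number of Laplacian eigenvalues of G (counted with multiplicity) lying in the interval [0, n − α(G)] is at least α(G). -/
/-!
Let `s` be a maximum independent set. The principal submatrix of the Laplacian indexed by `s` is
diagonal, its entries being the degrees of the vertices of `s`, and each of these is at most
`n - α` because neighbours of a vertex of `s` lie outside `s`. So the Laplacian form is at most
`(n - α) ‖x‖²` on the `α`-dimensional space of vectors supported on `s`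
(`lapMatrix_form_le_of_indep`), and the Courant-Fischer principle
(`card_le_card_eigenvalues_le`) gives `α` eigenvalues that are at most `n - α`. They are nonnegative
because the Laplacian is positive semidefinite.
-/

open scoped Matrix

open Polynomial

/-- `lapEigCount G I` is the number of Laplacian eigenvalues of `G`, counted with
multiplicity (i.e. as roots of the characteristic polynomial of the Laplacian matrix
`L(G) = D(G) - A(G)` over `ℝ`), lying in the set `I`. -/
noncomputable def lapEigCount {V : Type*} (G : SimpleGraph V) [Fintype V] [DecidableEq V]
    [DecidableRel G.Adj] (I : Set ℝ) : ℕ :=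
  Multiset.card (@Multiset.filter ℝ (· ∈ I) (Classical.decPred _) (G.lapMatrix ℝ).charpoly.roots)

/-- The independence number of a graph: the largest cardinality of a set of pairwise
nonadjacent vertices. -/
noncomputable def indepNum {V : Type*} (G : SimpleGraph V) [Fintype V] : ℕ :=
  sSup {n | ∃ s : Finset V, (s : Set V).Pairwise (fun x y => ¬ G.Adj x y) ∧ s.card = n}

/-- Half of the Courant-Fischer principle: if the quadratic form of `A` is at most `c ‖x‖²` on the
vectors supported on `s`, then at least `#s` eigenvalues are at most `c`. Otherwise a nonzero vector
supported on `s` would be orthogonal to every eigenvector with eigenvalue at most `c`. -/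
lemma card_le_card_eigenvalues_le {V : Type*} [Fintype V] [DecidableEq V]
    {A : Matrix V V ℝ} (hA : A.IsHermitian) (s : Finset V) (c : ℝ)
    (h : ∀ x : V → ℝ, (∀ v ∉ s, x v = 0) → x ⬝ᵥ A *ᵥ x ≤ c * (x ⬝ᵥ x)) :
    s.card ≤ (Finset.univ.filter fun i => hA.eigenvalues i ≤ c).card := by
  set U : Matrix V V ℝ := (hA.eigenvectorUnitary : Matrix V V ℝ) with hU
  have hUU : U * Uᵀ = 1 := by
    have := Unitary.coe_mul_star_self hA.eigenvectorUnitary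
    rwa [Unitary.coe_star, Matrix.star_eq_conjTranspose, Matrix.conjTranspose_eq_transpose_of_trivial] at this
  have hspec : A = U * Matrix.diagonal hA.eigenvalues * Uᵀ := by
    have := hA.spectral_theorem
    rw [Unitary.conjStarAlgAut_apply, Matrix.star_eq_conjTranspose,
      Matrix.conjTranspose_eq_transpose_of_trivial] at this
    exact this
  have hnorm (x : V → ℝ) : x ⬝ᵥ x = ∑ i, (Uᵀ *ᵥ x) i ^ 2 := by
    calc x ⬝ᵥ x = x ⬝ᵥ (U * Uᵀ) *ᵥ x := by rw [hUU, Matrix.one_mulVec]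
      _ = (Uᵀ *ᵥ x) ⬝ᵥ (Uᵀ *ᵥ x) := by
        rw [← Matrix.mulVec_mulVec, Matrix.dotProduct_mulVec, Matrix.mulVec_transpose]
      _ = _ := by simp [dotProduct, sq]
  have hform (x : V → ℝ) : x ⬝ᵥ A *ᵥ x = ∑ i, hA.eigenvalues i * (Uᵀ *ᵥ x) i ^ 2 := by
    calc
      x ⬝ᵥ A *ᵥ x = x ⬝ᵥ (U * Matrix.diagonal hA.eigenvalues * Uᵀ) *ᵥ x := by rw [← hspec]
      _ = (Uᵀ *ᵥ x) ⬝ᵥ (Matrix.diagonal hA.eigenvalues *ᵥ (Uᵀ *ᵥ x)) := by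
        rw [← Matrix.mulVec_mulVec, ← Matrix.mulVec_mulVec, Matrix.dotProduct_mulVec,
          ← Matrix.mulVec_transpose]
      _ = _ := by
        simp only [dotProduct, Matrix.mulVec_diagonal]
        exact Finset.sum_congr rfl fun i _ => by ring
  -- Extend by zero from `s`, then take the coordinates along the eigenvectors with small eigenvalue.
  let ext : (s → ℝ) →ₗ[ℝ] (V → ℝ) := Function.ExtendByZero.linearMap ℝ Subtype.val
  let T := Finset.univ.filter fun i => hA.eigenvalues i ≤ c
  let φ : (s → ℝ) →ₗ[ℝ] (T → ℝ) :=
    LinearMap.funLeft ℝ ℝ Subtype.val ∘ₗ Matrix.mulVecLin Uᵀ ∘ₗ ext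
  have hφ : Function.Injective φ := by
    rw [← LinearMap.ker_eq_bot, LinearMap.ker_eq_bot']
    intro z hz
    have hsupp : ∀ v ∉ s, ext z v = 0 := fun v hv =>
      Function.extend_apply' _ _ _ (by rintro ⟨a, rfl⟩; exact hv a.2)
    have hsmall : ∀ i, hA.eigenvalues i ≤ c → (Uᵀ *ᵥ ext z) i = 0 := fun i hi =>
      congrFun hz ⟨i, by simpa [T] using hi⟩
    have hle := h _ hsupp
    rw [hform, hnorm, Finset.mul_sum, ← sub_nonpos, ← Finset.sum_sub_distrib] at hle
    have hnn : ∀ i ∈ Finset.univ, 0 ≤ hA.eigenvalues i * (Uᵀ *ᵥ ext z) i ^ 2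
        - c * (Uᵀ *ᵥ ext z) i ^ 2 := by
      intro i _
      rw [← sub_mul]
      rcases le_or_gt (hA.eigenvalues i) c with hi | hi
      · simp [hsmall i hi]
      · exact mul_nonneg (sub_nonneg.2 hi.le) (sq_nonneg _)
    have hzero := (Finset.sum_eq_zero_iff_of_nonneg hnn).1 (le_antisymm hle (Finset.sum_nonneg hnn))
    have hcoord : ∀ i, (Uᵀ *ᵥ ext z) i = 0 := by
      intro i
      rcases le_or_gt (hA.eigenvalues i) c with hi | hi
      · exact hsmall i hi
      · have := hzero i (Finset.mem_univ i)
        rw [← sub_mul] at this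
        simpa [(sub_pos.2 hi).ne'] using this
    have hext : ext z = 0 := by
      rw [← dotProduct_self_eq_zero, hnorm]
      simp [hcoord]
    funext v
    have := congrFun hext v
    simpa [ext, Subtype.val_injective.extend_apply] using this
  simpa using LinearMap.finrank_le_finrank_of_injective hφ

/-- A vertex of an independent set has all its neighbours outside the set. -/
lemma degree_add_card_le_of_indep {V : Type*} [Fintype V] [DecidableEq V] (G : SimpleGraph V)
    [DecidableRel G.Adj] {s : Finset V} (hs : (s : Set V).Pairwise fun x y => ¬ G.Adj x y)
    {v : V} (hv : v ∈ s) : G.degree v + s.card ≤ Fintype.card V := by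
  have hd : Disjoint (G.neighborFinset v) s := by
    rw [Finset.disjoint_left]
    intro w hw hws
    rw [SimpleGraph.mem_neighborFinset] at hw
    exact hs hv hws hw.ne hw
  rw [← G.card_neighborFinset_eq_degree, ← Finset.card_union_of_disjoint hd]
  exact Finset.card_le_univ _

/-- On vectors supported on an independent set the adjacency part of the Laplacian form vanishes,
so only the degrees contribute. -/
lemma lapMatrix_form_le_of_indep {V : Type*} [Fintype V] [DecidableEq V] (G : SimpleGraph V)
    [DecidableRel G.Adj] {s : Finset V} (hs : (s : Set V).Pairwise fun x y => ¬ G.Adj x y)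
    (x : V → ℝ) (hx : ∀ v ∉ s, x v = 0) :
    x ⬝ᵥ G.lapMatrix ℝ *ᵥ x ≤ ((Fintype.card V : ℝ) - s.card) * (x ⬝ᵥ x) := by
  rw [dotProduct, dotProduct, Finset.mul_sum]
  refine Finset.sum_le_sum fun v _ => ?_
  by_cases hv : v ∈ s
  · have hadj : ∑ u ∈ G.neighborFinset v, x u = 0 := by
      refine Finset.sum_eq_zero fun u hu => hx u fun hus => ?_
      rw [SimpleGraph.mem_neighborFinset] at hu
      exact hs hv hus hu.ne hu
    have hdeg : (G.degree v : ℝ) + s.card ≤ Fintype.card V := by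
      exact_mod_cast degree_add_card_le_of_indep G hs hv
    rw [SimpleGraph.lapMatrix_mulVec_apply, hadj]
    nlinarith [mul_self_nonneg (x v)]
  · simp [hx v hv]

lemma exists_indep_card_eq_indepNum {V : Type*} [Fintype V] (G : SimpleGraph V) :
    ∃ s : Finset V, (s : Set V).Pairwise (fun x y => ¬ G.Adj x y) ∧ s.card = indepNum G := by
  refine Nat.sSup_mem (s := {n | ∃ s : Finset V,
    (s : Set V).Pairwise (fun x y => ¬ G.Adj x y) ∧ s.card = n}) ⟨0, ∅, by simp⟩
    ⟨Fintype.card V, ?_⟩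
  rintro n ⟨s, -, rfl⟩
  exact Finset.card_le_univ s

/-- For a finite simple graph `G` on `n ≥ 1` vertices with independence
number `α(G)`, the number of Laplacian eigenvalues of `G` (with multiplicity) in the
interval `[0, n - α(G)]` is at least `α(G)`. -/
theorem indepNum_le_lapEigCount {V : Type*} [Fintype V] [DecidableEq V]
    (G : SimpleGraph V) [DecidableRel G.Adj] (hn : 1 ≤ Fintype.card V) :
    indepNum G ≤ lapEigCount G (Set.Icc 0 ((Fintype.card V : ℝ) - indepNum G)) := by
  obtain ⟨s, hs, hcard⟩ := exists_indep_card_eq_indepNum G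
  have hA : (G.lapMatrix ℝ).IsHermitian := G.isHermitian_lapMatrix ℝ
  have key := card_le_card_eigenvalues_le hA s _ (lapMatrix_form_le_of_indep G hs)
  rw [hcard] at key
  refine key.trans (le_of_eq ?_)
  unfold lapEigCount
  classical
  rw [hA.roots_charpoly_eq_eigenvalues, ← Multiset.countP_eq_card_filter, Multiset.countP_map,
    Finset.card_def, Finset.filter_val]
  refine congrArg _ (@Multiset.filter_congr _ _ _ (_) (_) _ fun i _ => ?_)
  have := (G.posSemidef_lapMatrix ℝ).eigenvalues_nonneg i
  simp [Set.mem_Icc, this]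
end

section
/- Let G be a finite simple graph and let u, v be two distinct vertices of G. Let N = { w ∈ V(G) : the neighborhood of w in G is exactly {u, v} }. Then 2 is a root of the characteristic polynomial of L(G) with multiplicity at least |N| − 1; that is, (x − 2)^{|N|−1} divides μ(G,x). -/
/-!
For a vertex `w` with neighborhood `{u, v}`, the column of the Laplacian at `w` is
`2 e_w - (e_u + e_v)`. Hence if `f` is a function on the set `N` of such vertices, the vector
`∑ w ∈ N, f w • e_w` is mapped to twice itself minus `(∑ f) • (e_u + e_v)`, so the functions with
zero sum embed in the eigenspace of `2`. They form the kernel of a linear functional on `ℝ ^ N`,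
so this eigenspace has dimension at least `|N| - 1`; the geometric multiplicity of an eigenvalue
is at most its algebraic multiplicity (`LinearMap.finrank_eigenspace_le`).
-/

open Polynomial

lemma lapMatrix_mulVec_single_of_neighborSet_eq {V : Type*} [Fintype V] [DecidableEq V]
    (G : SimpleGraph V) [DecidableRel G.Adj] {u v w : V} (huv : u ≠ v)
    (hw : G.neighborSet w = {u, v}) :
    (G.lapMatrix ℝ).mulVec (Pi.single w 1) =
      (2 : ℝ) • Pi.single w 1 - (Pi.single u 1 + Pi.single v 1) := by
  have hadj (a : V) : G.Adj w a ↔ a = u ∨ a = v := by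
    rw [← G.mem_neighborSet, hw]; simp
  have hdeg : G.degree w = 2 := by
    have h : G.neighborFinset w = {u, v} := by ext a; simp [hadj]
    rw [← G.card_neighborFinset_eq_degree, h, Finset.card_pair huv]
  ext a
  have h := hadj a
  rw [G.adj_comm] at h
  simp only [Matrix.mulVec_single_one, Matrix.col_apply, SimpleGraph.lapMatrix,
    SimpleGraph.degMatrix, Matrix.sub_apply, Matrix.diagonal_apply, SimpleGraph.adjMatrix_apply,
    Pi.sub_apply, Pi.add_apply, Pi.smul_apply, Pi.single_apply, h, smul_eq_mul]
  congr 1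
  · by_cases haw : a = w
    · subst haw; simp [hdeg]
    · simp [haw]
  · by_cases hau : a = u
    · subst hau; simp [huv]
    · simp [hau]

/-- If `N` is the set of vertices whose neighborhood is exactly `{u, v}`,
then `(x - 2)^{|N| - 1}` divides the Laplacian characteristic polynomial of `G`. -/
theorem pow_sub_two_dvd_charpoly {V : Type*} [Fintype V] [DecidableEq V]
    (G : SimpleGraph V) [DecidableRel G.Adj] (u v : V) (huv : u ≠ v) :
    (X - C (2 : ℝ)) ^ ({w : V | G.neighborSet w = {u, v}}.ncard - 1) ∣
      (G.lapMatrix ℝ).charpoly := by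
  classical
  set N : Set V := {w : V | G.neighborSet w = {u, v}} with hN
  let E := Module.End.eigenspace (Matrix.toLin' (G.lapMatrix ℝ)) 2
  let ι : (N → ℝ) →ₗ[ℝ] (V → ℝ) :=
    Fintype.linearCombination ℝ (fun w : N => Pi.single (w : V) (1 : ℝ))
  let σ : (N → ℝ) →ₗ[ℝ] ℝ := Fintype.linearCombination ℝ (fun _ : N => (1 : ℝ))
  have hι : Function.Injective ι := by
    have h := (Pi.basisFun ℝ V).linearIndependent.comp ((↑) : N → V) Subtype.val_injective
    have hfun : (Pi.basisFun ℝ V) ∘ ((↑) : N → V) = fun w : N => Pi.single (w : V) (1 : ℝ) := by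
      ext; simp
    rw [hfun] at h
    exact h.fintypeLinearCombination_injective
  have hmap : σ.ker.map ι ≤ E := by
    rintro _ ⟨f, hf, rfl⟩
    have hf : ∑ w, f w = 0 := by simpa [σ, Fintype.linearCombination_apply] using hf
    rw [Module.End.mem_eigenspace_iff]
    have hcol (w : N) : Matrix.toLin' (G.lapMatrix ℝ) (Pi.single (w : V) 1) =
        (2 : ℝ) • Pi.single (w : V) 1 - (Pi.single u 1 + Pi.single v 1) := by
      rw [Matrix.toLin'_apply]
      exact lapMatrix_mulVec_single_of_neighborSet_eq G huv w.2
    simp only [ι, Fintype.linearCombination_apply, map_sum, map_smul, hcol, smul_sub,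
      Finset.sum_sub_distrib, ← Finset.sum_smul, hf, zero_smul, sub_zero, Finset.smul_sum]
    exact Finset.sum_congr rfl fun w _ => smul_comm _ _ _
  have hker : N.ncard - 1 ≤ Module.finrank ℝ σ.ker := by
    have h1 := σ.finrank_range_add_finrank_ker
    have h2 := Submodule.finrank_le σ.range
    rw [Module.finrank_fintype_fun_eq_card, ← Nat.card_eq_fintype_card,
      Nat.card_coe_set_eq] at h1
    rw [Module.finrank_self] at h2
    omega
  have hE : Module.finrank ℝ σ.ker ≤ Module.finrank ℝ E := by
    rw [(Submodule.equivMapOfInjective ι hι σ.ker).finrank_eq]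
    exact Submodule.finrank_mono hmap
  have halg := LinearMap.finrank_eigenspace_le (Matrix.toLin' (G.lapMatrix ℝ)) 2
  rw [Matrix.charpoly_toLin'] at halg
  exact (pow_dvd_pow _ (hker.trans (hE.trans halg))).trans (pow_rootMultiplicity_dvd _ _)
end

section
/- Let G be a finite simple graph. For each unordered pair {u,v} of distinct vertices, let N_{u,v} = { w ∈ V(G) : the neighborhood of w in G is exactly {u, v} }. Then the multiplicity of 2 as a root of the characteristic polynomial of L(G) is at least the sum, over all unordered pairs {u,v} with N_{u,v} nonempty, of (|N_{u,v}| − 1). -/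
/-!
If two vertices `w`, `r` have the same neighborhood `{u, v}`, then `1_w - 1_r` is an eigenvector of
the Laplacian for the eigenvalue `2`: both vertices have degree `2`, and the adjacency matrix
annihilates the difference (`lapMatrix_mulVec_single_sub_single`). Fixing one representative in each
class of vertices with equal neighborhoods, the vectors `1_w - 1_{r(w)}`, for `w` of degree `2` that
is not the representative `r(w)` of its class, are linearly independent, because they restrict to the
standard basis on the coordinates of the non-representatives. There are `|N_{u,v}| - 1` of them for
each nonempty `N_{u,v}`, and the geometric multiplicity of `2` is at most its algebraic multiplicity.
-/

open Polynomial

lemma lapMatrix_mulVec_single_sub_single {V : Type*} [Fintype V] [DecidableEq V]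
    (G : SimpleGraph V) [DecidableRel G.Adj] {w r : V}
    (h : G.neighborSet r = G.neighborSet w) (hw : G.degree w = 2) :
    (G.lapMatrix ℝ).mulVec (Pi.single w 1 - Pi.single r 1) =
      (2 : ℝ) • (Pi.single w 1 - Pi.single r 1) := by
  have hr : G.degree r = 2 := by
    rw [← hw, ← G.card_neighborSet_eq_degree, ← G.card_neighborSet_eq_degree]
    exact Fintype.card_congr (Equiv.setCongr h)
  have hadj (i : V) : G.Adj i r ↔ G.Adj i w := by
    rw [G.adj_comm i r, G.adj_comm i w]
    exact Set.ext_iff.1 h i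
  have hcol (i t : V) (ht : G.degree t = 2) :
      G.lapMatrix ℝ i t = 2 * (Pi.single t 1 : V → ℝ) i - if G.Adj i t then 1 else 0 := by
    by_cases hit : i = t
    · subst hit
      simp [SimpleGraph.lapMatrix, SimpleGraph.degMatrix, ht]
    · simp [SimpleGraph.lapMatrix, SimpleGraph.degMatrix, SimpleGraph.adjMatrix_apply, hit]
  ext i
  rw [Matrix.mulVec_sub]
  simp only [Matrix.mulVec_single_one, Pi.sub_apply, Pi.smul_apply, smul_eq_mul, Matrix.col_apply]
  rw [hcol i w hw, hcol i r hr]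
  simp only [hadj]
  ring

/-- If `rep` maps every `w ∈ S` outside `S`, the vectors `1_w - 1_{rep w}`, `w ∈ S`, are linearly
independent: restricted to the coordinates in `S` they are the standard basis. -/
lemma linearIndependent_single_sub_single {V : Type*} [Fintype V] [DecidableEq V]
    (S : Finset V) (rep : V → V) (hrep : ∀ w ∈ S, rep w ∉ S) :
    LinearIndependent ℝ
      (fun w : S => (Pi.single (w : V) 1 - Pi.single (rep w) 1 : V → ℝ)) := by
  apply LinearIndependent.of_comp (LinearMap.funLeft ℝ ℝ (Subtype.val : S → V))
  convert (Pi.basisFun ℝ S).linearIndependent using 1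
  ext w i
  have hi : (i : V) ≠ rep w := fun h => hrep w w.2 (h ▸ i.2)
  rw [Pi.basisFun_apply, Function.comp_apply, LinearMap.funLeft_apply, Pi.sub_apply,
    Pi.single_eq_of_ne hi, sub_zero, Pi.single_apply, Pi.single_apply]
  simp only [Subtype.ext_iff]

open scoped Classical in
/-- The multiplicity of `2` as a root of the Laplacian characteristic
polynomial of `G` is at least the sum, over all unordered pairs `{u, v}` of distinct
vertices whose associated set `N_{u,v} = {w | N_G(w) = {u, v}}` is nonempty, of
`|N_{u,v}| - 1`. -/
theorem sum_le_rootMultiplicity_two {V : Type*} [Fintype V] [DecidableEq V]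
    (G : SimpleGraph V) [DecidableRel G.Adj] :
    ∑ e ∈ Finset.univ.filter
        (fun e : Sym2 V => ¬ e.IsDiag ∧ {w : V | G.neighborSet w = {x | x ∈ e}}.Nonempty),
        ({w : V | G.neighborSet w = {x | x ∈ e}}.ncard - 1)
      ≤ ((G.lapMatrix ℝ).charpoly).rootMultiplicity 2 := by
  -- a representative of each class of vertices with equal neighborhoods
  obtain ⟨rep, hrep, hrep_eq⟩ : ∃ rep : V → V, (∀ w, G.neighborSet (rep w) = G.neighborSet w) ∧
      ∀ w w', G.neighborSet w = G.neighborSet w' → rep w = rep w' := by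
    refine ⟨fun w => Set.rangeSplitting G.neighborSet (Set.rangeFactorization G.neighborSet w),
      fun w => Set.apply_rangeSplitting _ _, fun w w' h => ?_⟩
    exact congrArg _ (Subtype.ext h)
  set S : Finset V := Finset.univ.filter (fun w => rep w ≠ w ∧ G.degree w = 2) with hS
  have hsum : ∑ e ∈ Finset.univ.filter
        (fun e : Sym2 V => ¬ e.IsDiag ∧ {w : V | G.neighborSet w = {x | x ∈ e}}.Nonempty),
        ({w : V | G.neighborSet w = {x | x ∈ e}}.ncard - 1) ≤ S.card := by
    have hle : ∀ e ∈ Finset.univ.filter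
        (fun e : Sym2 V => ¬ e.IsDiag ∧ {w : V | G.neighborSet w = {x | x ∈ e}}.Nonempty),
        {w : V | G.neighborSet w = {x | x ∈ e}}.ncard - 1 ≤
          (S.filter (fun w => G.neighborSet w = {x | x ∈ e})).card := by
      intro e he
      obtain ⟨-, hd, w₀, hw₀⟩ := Finset.mem_filter.1 he
      simp only [Set.mem_ofPred_eq] at hw₀
      rw [Set.ncard_eq_toFinset_card']
      refine Finset.pred_card_le_card_erase (a := rep w₀) |>.trans (Finset.card_le_card ?_)
      intro w hw
      simp only [Finset.mem_erase, Set.mem_toFinset, Set.mem_ofPred_eq] at hw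
      simp only [hS, Finset.mem_filter, Finset.mem_univ, true_and]
      refine ⟨⟨?_, ?_⟩, hw.2⟩
      · rw [hrep_eq w w₀ (hw.2.trans hw₀.symm)]
        exact hw.1.symm
      · rw [← G.card_neighborSet_eq_degree, ← Nat.card_eq_fintype_card, Nat.card_coe_set_eq, hw.2]
        induction e with
        | _ u v =>
          have : {x | x ∈ s(u, v)} = ({u, v} : Set V) := by ext; simp
          rw [this]
          exact Set.ncard_pair (by simpa using hd)
    refine (Finset.sum_le_sum hle).trans ?_
    rw [← Finset.card_biUnion]
    · exact Finset.card_le_card (Finset.biUnion_subset.2 fun e _ => Finset.filter_subset _ _)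
    · intro e _ e' _ hne
      refine Finset.disjoint_left.2 fun w hw hw' => hne ?_
      have h := (Finset.mem_filter.1 hw).2.symm.trans (Finset.mem_filter.1 hw').2
      exact Sym2.ext fun x => Set.ext_iff.1 h x
  have hli := linearIndependent_single_sub_single S rep fun w _ hw =>
    (Finset.mem_filter.1 hw).2.1 (hrep_eq _ _ (hrep w))
  refine hsum.trans ?_
  have hspan : Submodule.span ℝ (Set.range
      (fun w : S => (Pi.single (w : V) 1 - Pi.single (rep w) 1 : V → ℝ))) ≤
      Module.End.eigenspace (Matrix.toLin' (G.lapMatrix ℝ)) 2 := by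
    rw [Submodule.span_le]
    rintro _ ⟨w, rfl⟩
    rw [SetLike.mem_coe, Module.End.mem_eigenspace_iff, Matrix.toLin'_apply]
    exact lapMatrix_mulVec_single_sub_single G (hrep w) (Finset.mem_filter.1 w.2).2.2
  calc S.card = _ := by rw [finrank_span_eq_card hli, Fintype.card_coe]
    _ ≤ _ := Submodule.finrank_mono hspan
    _ ≤ _ := LinearMap.finrank_eigenspace_le _ _
    _ = _ := by rw [Matrix.charpoly_toLin']
end
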